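/- For every integer k ≥ 3 and every real r > 2^(k-1)·ln 2 − (ln 2)/2, the probability that a random k-CNF formula F_k(n, m) with m = ⌊rn⌋ clauses is NAE-satisfiable tends to 0 as n → ∞. -/

import Mathlib

/-- A proper `k`-clause on `n` Boolean variables: a set of `k` literals
on `k` distinct variables.  A literal is a pair `(v, s)`. -/
def IsProperClause (n k : ℕ) (C : Finset (Fin n × Bool)) : Prop :=
  C.card = k ∧ (C.image Prod.fst).card = k

/-- An assignment NAE-satisfies a clause if it satisfies at least one literal and
fails to satisfy at least one literal. -/
def NAESatisfiesClause {n : ℕ} (σ : Fin n → Bool) (C : Finset (Fin n × Bool)) : Prop :=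
  (∃ l ∈ C, σ l.1 = l.2) ∧ (∃ l ∈ C, σ l.1 ≠ l.2)

/-- A formula is NAE-satisfiable if some assignment NAE-satisfies every clause. -/
def IsNAESatisfiable {n : ℕ} (F : Finset (Finset (Fin n × Bool))) : Prop :=
  ∃ σ : Fin n → Bool, ∀ C ∈ F, NAESatisfiesClause σ C

open Finset in
theorem aux_choose (S M : ℕ) (q : ℝ) (hq0 : 0 ≤ q) (hq1 : q ≤ 1) (h : (S : ℝ) = q * M) (m : ℕ) :
    (S.choose m : ℝ) ≤ q ^ m * (M.choose m : ℝ) := by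
  have key : ∀ m : ℕ, (S.descFactorial m : ℝ) ≤ q ^ m * (M.descFactorial m : ℝ) := by
    intro m
    induction m with
    | zero => simp
    | succ m ih =>
      rw [Nat.descFactorial_succ, Nat.descFactorial_succ]
      push_cast
      have h1 : ((S - m : ℕ) : ℝ) ≤ q * ((M - m : ℕ) : ℝ) := by
        rcases le_total S m with hS | hS
        · rw [Nat.sub_eq_zero_of_le hS]
          push_cast
          positivity
        · rw [Nat.cast_sub hS]
          have h2 : (M : ℝ) - m ≤ ((M - m : ℕ) : ℝ) := by
            have : M ≤ (M - m) + m := by omega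
            have : (M : ℝ) ≤ ((M - m : ℕ) : ℝ) + m := by exact_mod_cast this
            linarith
          have h3 : q * (m : ℝ) ≤ m := by
            have : (0 : ℝ) ≤ m := Nat.cast_nonneg m
            nlinarith
          have h4 := mul_le_mul_of_nonneg_left h2 hq0
          nlinarith
      calc _ ≤ (q * ((M - m : ℕ) : ℝ)) * (q ^ m * (M.descFactorial m : ℝ)) := by
            gcongr
        _ = _ := by ring
  have h1 := key m
  rw [Nat.descFactorial_eq_factorial_mul_choose, Nat.descFactorial_eq_factorial_mul_choose] at h1
  push_cast at h1
  have hm : (0 : ℝ) < (m.factorial : ℝ) := by exact_mod_cast Nat.factorial_pos m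
  have h2 : (m.factorial : ℝ) * (S.choose m : ℝ) ≤ m.factorial * (q ^ m * (M.choose m : ℝ)) := by
    linarith
  exact le_of_mul_le_mul_left h2 hm

open Finset Classical in
theorem aux_clauses (n k : ℕ) (σ : Fin n → Bool) :
    ((univ : Finset (Finset (Fin n × Bool))).filter
      (fun C => IsProperClause n k C ∧ NAESatisfiesClause σ C)).card ≤ (2 ^ k - 2) * n.choose k := by
  set B : Finset (Σ _ : Finset (Fin n), Finset (Fin n)) :=
    (powersetCard k (univ : Finset (Fin n))).sigma (fun T => (T.powerset.erase ∅).erase T) with hB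
  have hBc : B.card ≤ (2 ^ k - 2) * n.choose k := by
    rw [hB, card_sigma]
    calc _ ≤ ∑ T ∈ powersetCard k (univ : Finset (Fin n)), (2 ^ k - 2) := by
          apply sum_le_sum
          intro T hT
          rw [mem_powersetCard] at hT
          by_cases h0 : T = ∅
          · subst h0
            simp
          rw [card_erase_of_mem (by simp [h0]), card_erase_of_mem (by simp), card_powerset, hT.2]
          omega
      _ = _ := by
          rw [sum_const, card_powersetCard, card_univ, Fintype.card_fin, smul_eq_mul, mul_comm]
  refine le_trans ?_ hBc
  have hinj : ∀ C : Finset (Fin n × Bool), IsProperClause n k C →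
      ∀ a ∈ C, ∀ b ∈ C, a.1 = b.1 → a = b := by
    intro C hC a ha b hb hab
    have : Set.InjOn Prod.fst (C : Set (Fin n × Bool)) :=
      card_image_iff.mp (hC.2.trans hC.1.symm)
    exact this ha hb hab
  apply card_le_card_of_injOn
    (fun C => ⟨C.image Prod.fst, (C.filter (fun l => σ l.1 = l.2)).image Prod.fst⟩)
  · intro C hC
    simp only [coe_filter, mem_univ, true_and, Set.mem_setOf_eq] at hC
    obtain ⟨hp, ⟨a, ha, ha'⟩, ⟨b, hb, hb'⟩⟩ := hC
    simp only [hB, coe_sigma, Set.mem_sigma_iff, mem_coe, mem_powersetCard, mem_erase, mem_powerset]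
    refine ⟨⟨subset_univ _, hp.2⟩, ?_, ?_, ?_⟩
    · intro h
      have : b.1 ∈ C.image Prod.fst := mem_image_of_mem _ hb
      rw [← h, mem_image] at this
      obtain ⟨c, hc, hcb⟩ := this
      rw [mem_filter] at hc
      have := hinj C hp c hc.1 b hb hcb
      subst this
      exact hb' hc.2
    · apply Nonempty.ne_empty
      exact ⟨a.1, mem_image_of_mem _ (mem_filter.mpr ⟨ha, ha'⟩)⟩
    · exact image_subset_image (filter_subset _ _)
  · have main : ∀ C C' : Finset (Fin n × Bool), IsProperClause n k C →
        C.image Prod.fst = C'.image Prod.fst →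
        (C.filter (fun l => σ l.1 = l.2)).image Prod.fst
          = (C'.filter (fun l => σ l.1 = l.2)).image Prod.fst → C ⊆ C' := by
      intro C C' hC hT hA a ha
      by_cases hs : σ a.1 = a.2
      · have : a.1 ∈ (C.filter (fun l => σ l.1 = l.2)).image Prod.fst :=
          mem_image_of_mem _ (mem_filter.mpr ⟨ha, hs⟩)
        rw [hA, mem_image] at this
        obtain ⟨c, hc, hca⟩ := this
        rw [mem_filter] at hc
        have : c = a := Prod.ext hca (by rw [← hc.2, hca, hs])
        exact this ▸ hc.1
      · have : a.1 ∈ C.image Prod.fst := mem_image_of_mem _ ha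
        rw [hT, mem_image] at this
        obtain ⟨c, hc, hca⟩ := this
        have hcs : σ c.1 ≠ c.2 := by
          intro hcs
          have : c.1 ∈ (C'.filter (fun l => σ l.1 = l.2)).image Prod.fst :=
            mem_image_of_mem _ (mem_filter.mpr ⟨hc, hcs⟩)
          rw [← hA, mem_image] at this
          obtain ⟨d, hd, hdc⟩ := this
          rw [mem_filter] at hd
          have := hinj C hC d hd.1 a ha (hdc.trans hca)
          subst this
          exact hs hd.2
        have : c = a := by
          refine Prod.ext hca ?_
          rw [hca] at hcs
          revert hs hcs
          cases σ a.1 <;> cases a.2 <;> cases c.2 <;> simp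
        exact this ▸ hc
    intro C hC C' hC' h
    simp only [coe_filter, mem_univ, true_and, Set.mem_setOf_eq] at hC hC'
    simp only [Sigma.mk.injEq, heq_eq_eq] at h
    exact Subset.antisymm (main C C' hC.1 h.1 h.2) (main C' C hC'.1 h.1.symm h.2.symm)

open Finset Classical in
theorem aux_count (n k m : ℕ) :
    Nat.card {F : Finset (Finset (Fin n × Bool)) //
            F.card = m ∧ (∀ C ∈ F, IsProperClause n k C) ∧
              IsNAESatisfiable F} ≤ 2 ^ n * ((2 ^ k - 2) * n.choose k).choose m := by
  rw [Nat.card_eq_fintype_card, Fintype.card_subtype]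
  calc _ ≤ ((univ : Finset (Fin n → Bool)).biUnion (fun σ => powersetCard m
        ((univ : Finset (Finset (Fin n × Bool))).filter
          (fun C => IsProperClause n k C ∧ NAESatisfiesClause σ C)))).card := by
        apply card_le_card
        intro F hF
        simp only [mem_filter, mem_univ, true_and] at hF
        obtain ⟨h1, h2, σ, h3⟩ := hF
        simp only [mem_biUnion, mem_univ, true_and, mem_powersetCard]
        refine ⟨σ, ?_, h1⟩
        intro C hC
        simp only [mem_filter, mem_univ, true_and]
        exact ⟨h2 C hC, h3 C hC⟩
    _ ≤ ∑ σ : Fin n → Bool, ((2 ^ k - 2) * n.choose k).choose m := by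
        refine card_biUnion_le.trans (sum_le_sum ?_)
        intro σ _
        rw [card_powersetCard]
        exact Nat.choose_le_choose m (aux_clauses n k σ)
    _ = _ := by simp

theorem aux_log (x r : ℝ) (hx0 : 0 < x) (hx1 : x < 1)
    (hr : (1 / x) * Real.log 2 - Real.log 2 / 2 < r) :
    Real.log 2 + r * Real.log (1 - x) < 0 := by
  have hL : 0 < Real.log 2 := Real.log_pos (by norm_num)
  have h1x : 0 < 1 - x := by linarith
  have h2x : 0 < 2 - x := by linarith
  have h := Real.le_log_one_add_of_nonneg (x := x / (1 - x)) (by positivity)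
  have e1 : 1 + x / (1 - x) = (1 - x)⁻¹ := by field_simp; ring
  have e2 : 2 * (x / (1 - x)) / (x / (1 - x) + 2) = 2 * x / (2 - x) := by
    have : x / (1 - x) + 2 = (2 - x) / (1 - x) := by field_simp; ring
    rw [this]
    field_simp
  rw [e1, e2, Real.log_inv] at h
  have hpos : 0 < 2 * x / (2 - x) := by positivity
  have e3 : (1 / x) * Real.log 2 - Real.log 2 / 2 = Real.log 2 * ((2 - x) / (2 * x)) := by
    field_simp
  rw [e3] at hr
  have h4 : Real.log 2 * ((2 - x) / (2 * x)) * (2 * x / (2 - x)) = Real.log 2 := by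
    field_simp
  have h5 : 0 < Real.log 2 * ((2 - x) / (2 * x)) := by positivity
  have h6 := mul_le_mul_of_nonneg_left h h5.le
  have h7 : Real.log 2 * ((2 - x) / (2 * x)) * (-Real.log (1 - x)) < r * (-Real.log (1 - x)) :=
    mul_lt_mul_of_pos_right hr (by linarith)
  linarith

/-- For all `k ≥ 3` and `r > 2^(k-1) ln 2 - (ln 2)/2`, the probability that a uniformly
random `k`-CNF formula with `⌊rn⌋` clauses is NAE-satisfiable tends to `0`. -/
theorem nae_ksat_unsat_whp (k : ℕ) (hk : 3 ≤ k) (r : ℝ)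
    (hr : 2 ^ (k - 1) * Real.log 2 - Real.log 2 / 2 < r) :
    Filter.Tendsto
      (fun n : ℕ =>
        (Nat.card {F : Finset (Finset (Fin n × Bool)) //
            F.card = ⌊r * (n : ℝ)⌋₊ ∧ (∀ C ∈ F, IsProperClause n k C) ∧
              IsNAESatisfiable F} : ℝ) /
          (Nat.choose (2 ^ k * Nat.choose n k) ⌊r * (n : ℝ)⌋₊ : ℝ))
      Filter.atTop (nhds 0) := by
  set x : ℝ := 1 / 2 ^ (k - 1) with hx
  have hx0 : 0 < x := by positivity
  have hx1 : x < 1 := by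
    rw [hx, div_lt_one (by positivity)]
    exact one_lt_pow₀ (by norm_num) (by omega)
  have hlog := aux_log x r hx0 hx1 (by rw [hx, one_div_one_div]; exact hr)
  have h1x : 0 < 1 - x := by linarith
  set c : ℝ := Real.log 2 + r * Real.log (1 - x) with hc
  have hl0 : Real.log (1 - x) ≤ 0 := Real.log_nonpos h1x.le (by linarith)
  have hlim : Filter.Tendsto (fun n : ℕ => Real.exp (c * (n : ℝ) + -Real.log (1 - x)))
      Filter.atTop (nhds 0) := by
    apply Real.tendsto_exp_atBot.comp
    apply Filter.tendsto_atBot_add_const_right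
    exact (tendsto_natCast_atTop_atTop (R := ℝ)).const_mul_atTop_of_neg hlog
  refine squeeze_zero (fun n => by positivity) (fun n => ?_) hlim
  set m := ⌊r * (n : ℝ)⌋₊ with hm
  have hk2 : (2 : ℕ) ≤ 2 ^ k := by
    calc 2 = 2 ^ 1 := by norm_num
      _ ≤ 2 ^ k := Nat.pow_le_pow_right (by norm_num) (by omega)
  have hS : (((2 ^ k - 2) * n.choose k : ℕ) : ℝ) = (1 - x) * ((2 ^ k * n.choose k : ℕ) : ℝ) := by
    push_cast [Nat.cast_sub hk2]
    have : (2 : ℝ) ^ k = 2 * 2 ^ (k - 1) := by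
      rw [← pow_succ']
      congr 1
      omega
    rw [hx, this]
    field_simp
  have hch := aux_choose _ _ (1 - x) h1x.le (by linarith) hS m
  have hcount : (Nat.card {F : Finset (Finset (Fin n × Bool)) //
            F.card = m ∧ (∀ C ∈ F, IsProperClause n k C) ∧
              IsNAESatisfiable F} : ℝ) ≤ 2 ^ n * (((2 ^ k - 2) * n.choose k).choose m : ℝ) := by
    exact_mod_cast aux_count n k m
  have hexp : (2 : ℝ) ^ n * (1 - x) ^ m ≤ Real.exp (c * (n : ℝ) + -Real.log (1 - x)) := by
    have e1 : (2 : ℝ) ^ n * (1 - x) ^ m = Real.exp (n * Real.log 2 + m * Real.log (1 - x)) := by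
      rw [Real.exp_add, Real.exp_nat_mul, Real.exp_nat_mul, Real.exp_log (by norm_num),
        Real.exp_log h1x]
    rw [e1]
    apply Real.exp_le_exp.mpr
    have hf : r * n - 1 ≤ (m : ℝ) := by
      have := Nat.lt_floor_add_one (r * (n : ℝ))
      rw [← hm] at this
      linarith
    have := mul_le_mul_of_nonpos_right hf hl0
    rw [hc]
    linarith
  refine div_le_of_le_mul₀ (by positivity) (by positivity) ?_
  calc _ ≤ _ := hcount
    _ ≤ 2 ^ n * ((1 - x) ^ m * ((2 ^ k * n.choose k).choose m : ℝ)) := by gcongr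
    _ = (2 ^ n * (1 - x) ^ m) * ((2 ^ k * n.choose k).choose m : ℝ) := by ring
    _ ≤ _ := by gcongr
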